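/- arXiv:2306.14522 — 2 statements merged into one kernel-verified Lean document; each statement's English description precedes it below -/
import Mathlib

section
/- Let φ : ℝ^d → ℝ be differentiable and μ-strongly convex with μ > 0, let R : ℝ^d → ℝ ∪ {+∞} be proper and convex, let α > 0 and x ∈ ℝ^d, and let g₁, g₂ ∈ ℝ^d. For i = 1, 2, let x_i⁺ satisfy ∇φ(x) − αg_i − ∇φ(x_i⁺) ∈ α∂R(x_i⁺), and set G_i := (x − x_i⁺)/α. Then ‖G₁ − G₂‖ ≤ (1/μ)‖g₁ − g₂‖. In particular, with g₁ = ∇F(x) the true gradient and g₂ = ∇̃ a stochastic estimator, the Bregman gradient mapping and the stochastic Bregman gradient mapping at x differ in norm by at most ‖∇F(x) − ∇̃‖/μ. -/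
open scoped RealInnerProductSpace

section Convex

variable {E : Type*} [NormedAddCommGroup E] [InnerProductSpace ℝ E]

/-- A convex function lies above its tangent hyperplanes. -/
theorem ConvexOn.add_inner_gradient_le [CompleteSpace E] {f : E → ℝ}
    (hf : ConvexOn ℝ Set.univ f) {p a : E} (hp : HasGradientAt f p a) (b : E) :
    f a + ⟪p, b - a⟫ ≤ f b := by
  have hline : ConvexOn ℝ Set.univ (f ∘ AffineMap.lineMap (k := ℝ) a b) := by
    simpa using hf.comp_affineMap (AffineMap.lineMap (k := ℝ) a b)
  have hderiv : HasDerivAt (f ∘ AffineMap.lineMap (k := ℝ) a b) ⟪p, b - a⟫ 0 := by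
    have hp' : HasFDerivAt f (InnerProductSpace.toDual ℝ E p)
        (AffineMap.lineMap (k := ℝ) a b 0) := by
      simpa using hp.hasFDerivAt
    simpa using hp'.comp_hasDerivAt (0 : ℝ) AffineMap.hasDerivAt_lineMap
  have h := hline.le_slope_of_hasDerivAt (Set.mem_univ 0) (Set.mem_univ 1) one_pos hderiv
  simp [slope_def_field] at h
  linarith

/-- The gradient of a `μ`-strongly convex function is `μ`-strongly monotone. -/
theorem mul_norm_sq_le_inner_gradient_sub [CompleteSpace E] {f : E → ℝ} {μ : ℝ}
    (hf : ConvexOn ℝ Set.univ (fun z => f z - μ / 2 * ‖z‖ ^ 2)) {p q a b : E}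
    (hp : HasGradientAt f p a) (hq : HasGradientAt f q b) :
    μ * ‖a - b‖ ^ 2 ≤ ⟪p - q, a - b⟫ := by
  have hgrad {r c : E} (hr : HasGradientAt f r c) :
      HasGradientAt (fun z => f z - μ / 2 * ‖z‖ ^ 2) (r - μ • c) c := by
    have h := hr.hasFDerivAt.sub ((hasStrictFDerivAt_norm_sq c).hasFDerivAt.const_mul (μ / 2))
    rw [hasGradientAt_iff_hasFDerivAt]
    refine h.congr_fderiv ?_
    ext v
    simp
    ring
  have hab := hf.add_inner_gradient_le (hgrad hp) b
  have hba := hf.add_inner_gradient_le (hgrad hq) a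
  rw [← real_inner_self_eq_norm_sq (a - b)]
  simp only [inner_sub_left, inner_sub_right, inner_smul_left, RCLike.conj_to_real] at hab hba ⊢
  linarith [real_inner_comm a b]

/-- Subgradients of a proper extended-real-valued function are monotone. -/
theorem inner_sub_nonneg_of_subgradient {R : E → EReal} (hR_ne_top : ∃ z, R z ≠ ⊤)
    (hR_ne_bot : ∀ z, R z ≠ ⊥) {v w a b : E}
    (hv : ∀ u, R a + ((⟪v, u - a⟫ : ℝ) : EReal) ≤ R u)
    (hw : ∀ u, R b + ((⟪w, u - b⟫ : ℝ) : EReal) ≤ R u) :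
    0 ≤ ⟪v - w, a - b⟫ := by
  obtain ⟨z, hz⟩ := hR_ne_top
  have ha : R a ≠ ⊤ := fun h => hz (top_le_iff.mp (by simpa [h] using hv z))
  have hb : R b ≠ ⊤ := fun h => hz (top_le_iff.mp (by simpa [h] using hw z))
  have hab := hv b
  have hba := hw a
  lift R a to ℝ using ⟨ha, hR_ne_bot a⟩ with ra
  lift R b to ℝ using ⟨hb, hR_ne_bot b⟩ with rb
  norm_cast at hab hba
  simp only [inner_sub_left, inner_sub_right] at hab hba ⊢
  linarith

end Convex

/-- the Bregman gradient mappings computed with two gradient inputs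
`g₁, g₂` differ in norm by at most `(1/μ)‖g₁ − g₂‖`. In particular, the Bregman gradient
mapping and the stochastic Bregman gradient mapping at `x` differ by at most
`‖∇F(x) − ∇̃‖/μ`. -/
theorem bregman_gradient_mapping_gap {d : ℕ}
    (φ : EuclideanSpace ℝ (Fin d) → ℝ)
    (φ' : EuclideanSpace ℝ (Fin d) → EuclideanSpace ℝ (Fin d))
    (μ : ℝ) (hμ : 0 < μ)
    (hφ_diff : ∀ z, HasGradientAt φ (φ' z) z)
    (hφ_sconv : ConvexOn ℝ Set.univ (fun z => φ z - μ / 2 * ‖z‖ ^ 2))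
    (R : EuclideanSpace ℝ (Fin d) → EReal)
    (hR_ne_top : ∃ z, R z ≠ ⊤) (hR_ne_bot : ∀ z, R z ≠ ⊥)
    (hR_conv : ∀ u v : EuclideanSpace ℝ (Fin d), ∀ t : ℝ, 0 ≤ t → t ≤ 1 →
      R (t • u + (1 - t) • v) ≤ (t : EReal) * R u + ((1 - t : ℝ) : EReal) * R v)
    (α : ℝ) (hα : 0 < α)
    (x g₁ g₂ x₁p x₂p : EuclideanSpace ℝ (Fin d))
    -- ∇φ(x) − αg₁ − ∇φ(x₁⁺) ∈ α ∂R(x₁⁺)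
    (h₁ : ∀ u, R x₁p +
        ((⟪α⁻¹ • (φ' x - α • g₁ - φ' x₁p), u - x₁p⟫ : ℝ) : EReal) ≤ R u)
    -- ∇φ(x) − αg₂ − ∇φ(x₂⁺) ∈ α ∂R(x₂⁺)
    (h₂ : ∀ u, R x₂p +
        ((⟪α⁻¹ • (φ' x - α • g₂ - φ' x₂p), u - x₂p⟫ : ℝ) : EReal) ≤ R u) :
    ‖α⁻¹ • (x - x₁p) - α⁻¹ • (x - x₂p)‖ ≤ (1 / μ) * ‖g₁ - g₂‖ := by
  have hR := inner_sub_nonneg_of_subgradient hR_ne_top hR_ne_bot h₁ h₂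
  have hφ := mul_norm_sq_le_inner_gradient_sub hφ_sconv (hφ_diff x₁p) (hφ_diff x₂p)
  have hcs := real_inner_le_norm (g₂ - g₁) (x₁p - x₂p)
  have hsplit : α⁻¹ • (φ' x - α • g₁ - φ' x₁p) - α⁻¹ • (φ' x - α • g₂ - φ' x₂p) =
      (g₂ - g₁) - α⁻¹ • (φ' x₁p - φ' x₂p) := by
    match_scalars <;> field_simp <;> ring
  rw [hsplit, inner_sub_left, real_inner_smul_left] at hR
  have hmul : α⁻¹ * (μ * ‖x₁p - x₂p‖ ^ 2) ≤ ‖g₂ - g₁‖ * ‖x₁p - x₂p‖ := by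
    have := mul_le_mul_of_nonneg_left hφ (inv_pos.mpr hα).le
    linarith
  have hdist : α⁻¹ * μ * ‖x₁p - x₂p‖ ≤ ‖g₂ - g₁‖ := by
    rcases (norm_nonneg (x₁p - x₂p)).eq_or_lt with h | h
    · simp [← h]
    · exact le_of_mul_le_mul_right (by linarith) h
  rw [← smul_sub, sub_sub_sub_cancel_left, norm_smul, Real.norm_of_nonneg (inv_pos.mpr hα).le,
    norm_sub_rev x₂p, norm_sub_rev g₁, one_div, le_inv_mul_iff₀ hμ]
  linarith
end

section
/- Let φ : ℝ^d → ℝ be differentiable and convex, let F : ℝ^d → ℝ be differentiable and L_F-smooth adaptable with respect to φ on ℝ^d, let R : ℝ^d → ℝ ∪ {+∞} be proper and convex, and set Φ := F + R. Let α > 0, let x ∈ ℝ^d with R(x) < +∞, let ∇̃ ∈ ℝ^d, set ε := ∇F(x) − ∇̃, and let x⁺ satisfy ∇φ(x) − α∇̃ − ∇φ(x⁺) ∈ α∂R(x⁺). Then Φ(x⁺) ≤ Φ(x) − (1/α)·D_φ(x, x⁺) − (1/α − L_F)·D_φ(x⁺, x) + ⟨ε, x⁺ − x⟩. -/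
open scoped RealInnerProductSpace

/-- First-order characterization of convexity: a convex function lies above its tangent planes. -/
theorem ConvexOn.add_inner_gradient_le_s9 {E : Type*} [NormedAddCommGroup E] [InnerProductSpace ℝ E]
    [CompleteSpace E] {f : E → ℝ} {f' x : E} (hf : ConvexOn ℝ Set.univ f)
    (hx : HasGradientAt f f' x) (y : E) : f x + ⟪f', y - x⟫ ≤ f y := by
  have hconv : ConvexOn ℝ Set.univ (f ∘ AffineMap.lineMap (k := ℝ) x y) := by
    simpa using hf.comp_affineMap (AffineMap.lineMap (k := ℝ) x y)
  have hderiv : HasDerivAt (f ∘ AffineMap.lineMap (k := ℝ) x y) ⟪f', y - x⟫ 0 := by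
    have h : HasFDerivAt f (InnerProductSpace.toDual ℝ E f')
        (AffineMap.lineMap (k := ℝ) x y 0) := by
      simpa using hx.hasFDerivAt
    simpa using h.comp_hasDerivAt (0 : ℝ) AffineMap.hasDerivAt_lineMap
  have h := hconv.le_slope_of_hasDerivAt (Set.mem_univ 0) (Set.mem_univ 1) one_pos hderiv
  simp only [slope_def_field, Function.comp_apply, AffineMap.lineMap_apply_zero,
    AffineMap.lineMap_apply_one, sub_zero, div_one] at h
  linarith

/-- one-step descent lemma for the stochastic Bregman proximal gradient
update. With `ε = ∇F(x) − ∇̃` and `x⁺` the SBPG update,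
`Φ(x⁺) ≤ Φ(x) − (1/α)D_φ(x, x⁺) − (1/α − L_F)D_φ(x⁺, x) + ⟨ε, x⁺ − x⟩`. -/
theorem sbpg_one_step_descent {d : ℕ}
    (φ F : EuclideanSpace ℝ (Fin d) → ℝ)
    (φ' F' : EuclideanSpace ℝ (Fin d) → EuclideanSpace ℝ (Fin d))
    (hφ_diff : ∀ z, HasGradientAt φ (φ' z) z)
    (hφ_conv : ConvexOn ℝ Set.univ φ)
    (hF_diff : ∀ z, HasGradientAt F (F' z) z)
    (LF : ℝ)
    -- F is L_F-smooth adaptable with respect to φ on ℝ^d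
    (hsa₁ : ConvexOn ℝ Set.univ (fun z => LF * φ z + F z))
    (hsa₂ : ConvexOn ℝ Set.univ (fun z => LF * φ z - F z))
    (R : EuclideanSpace ℝ (Fin d) → EReal)
    (hR_ne_top : ∃ z, R z ≠ ⊤) (hR_ne_bot : ∀ z, R z ≠ ⊥)
    (hR_conv : ∀ u v : EuclideanSpace ℝ (Fin d), ∀ t : ℝ, 0 ≤ t → t ≤ 1 →
      R (t • u + (1 - t) • v) ≤ (t : EReal) * R u + ((1 - t : ℝ) : EReal) * R v)
    (α : ℝ) (hα : 0 < α)
    (x : EuclideanSpace ℝ (Fin d)) (hx : R x ≠ ⊤)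
    (g : EuclideanSpace ℝ (Fin d))  -- the gradient estimator ∇̃
    (xp : EuclideanSpace ℝ (Fin d))
    -- ∇φ(x) − α∇̃ − ∇φ(x⁺) ∈ α ∂R(x⁺)
    (hxp : ∀ u, R xp +
        ((⟪α⁻¹ • (φ' x - α • g - φ' xp), u - xp⟫ : ℝ) : EReal) ≤ R u) :
    ((F xp : ℝ) : EReal) + R xp ≤
      ((F x - (1 / α) * (φ x - φ xp - ⟪φ' xp, x - xp⟫)
          - (1 / α - LF) * (φ xp - φ x - ⟪φ' x, xp - x⟫)
          + ⟪F' x - g, xp - x⟫ : ℝ) : EReal) + R x := by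
  have hgrad : HasGradientAt (fun z => LF * φ z - F z) (LF • φ' x - F' x) x := by
    rw [hasGradientAt_iff_hasFDerivAt, map_sub, map_smul]
    exact ((hφ_diff x).hasFDerivAt.const_mul LF).sub (hF_diff x).hasFDerivAt
  have hdescent := hsa₂.add_inner_gradient_le_s9 hgrad xp
  have hsub := hxp x
  have hxp_ne_top : R xp ≠ ⊤ := by
    intro htop
    rw [htop, EReal.top_add_coe, top_le_iff] at hsub
    exact hx hsub
  lift R x to ℝ using ⟨hx, hR_ne_bot x⟩ with r
  lift R xp to ℝ using ⟨hxp_ne_top, hR_ne_bot xp⟩ with rp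
  norm_cast at hsub ⊢
  have hneg : ∀ v : EuclideanSpace ℝ (Fin d), ⟪v, x - xp⟫ = -⟪v, xp - x⟫ := fun v => by
    rw [← inner_neg_right, neg_sub]
  simp only [hneg, inner_sub_left, real_inner_smul_left] at hdescent hsub ⊢
  have hα' : α⁻¹ * α = 1 := inv_mul_cancel₀ hα.ne'
  rw [one_div]
  linear_combination hdescent + hsub - ⟪g, xp - x⟫ * hα'
end
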